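/- Suppose Assumption 1 holds, X and Y are conditionally independent given Z, the J ≥ 1 locations (t_j)_{j=1}^J in 𝒳̈ × 𝒴 are fixed, Σ = E[u_1 u_1ᵀ] is invertible, and (δ_n) are positive reals with δ_n → 0. With Σ̂_n = (1/n)Σ_{i=1}^n u_i u_iᵀ, the normalized oracle statistic n·‖(Σ̂_n + δ_n·Id_J)^{−1/2} S_n‖_2^2 converges in distribution, as n → ∞, to the chi-square law χ²(J) with J degrees of freedom. -/

import Mathlib

open MeasureTheory ProbabilityTheory Filter Topology Asymptotics
open scoped RealInnerProductSpace

noncomputable section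

namespace CIPaper

/-- A positive definite kernel. -/
def PosDefKernel {D : Type*} (k : D → D → ℝ) : Prop :=
  ∀ (n : ℕ) (x : Fin n → D) (c : Fin n → ℝ),
    0 ≤ ∑ i : Fin n, ∑ j : Fin n, c i * c j * k (x i) (x j)

/-- The mean embedding of `ν` with respect to the kernel `k`. -/
def meanEmbed {D : Type*} [MeasurableSpace D] (k : D → D → ℝ) (ν : Measure D) (t : D) : ℝ :=
  ∫ x, k x t ∂ν

/-- A kernel is characteristic if the mean embedding is injective on probability measures. -/
def Characteristic {D : Type*} [MeasurableSpace D] (k : D → D → ℝ) : Prop :=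
  ∀ P Q : Measure D, IsProbabilityMeasure P → IsProbabilityMeasure Q →
    (∀ t, meanEmbed k P t = meanEmbed k Q t) → P = Q

def BoundedKernel {D : Type*} (k : D → D → ℝ) : Prop := ∃ C, ∀ x y, |k x y| ≤ C

/-- Assumption 1 of the paper, for the tensor product kernel built from `kX` and `kY` :
the tensor kernel is positive definite, characteristic, bounded, continuous and analytic. -/
structure Assumption1 {DX DY : Type*} [MeasurableSpace DX] [MeasurableSpace DY]
    [NormedAddCommGroup DX] [NormedSpace ℝ DX] [NormedAddCommGroup DY] [NormedSpace ℝ DY]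
    (kX : DX → DX → ℝ) (kY : DY → DY → ℝ) : Prop where
  posdef : PosDefKernel fun p q : DX × DY => kX p.1 q.1 * kY p.2 q.2
  charac : Characteristic fun p q : DX × DY => kX p.1 q.1 * kY p.2 q.2
  bounded : BoundedKernel fun p q : DX × DY => kX p.1 q.1 * kY p.2 q.2
  continuous : Continuous fun pq : (DX × DY) × (DX × DY) => kX pq.1.1 pq.2.1 * kY pq.1.2 pq.2.2
  analytic : ∀ p : DX × DY, AnalyticOnNhd ℝ (fun q : DX × DY => kX p.1 q.1 * kY p.2 q.2) Set.univ

/-- The random metric `d_{p,J}` between two measures, with locations `t`. -/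
def dpJ {D : Type*} [MeasurableSpace D] (k : D → D → ℝ) (p : ℕ) {J : ℕ}
    (t : Fin J → D) (P Q : Measure D) : ℝ :=
  ((J : ℝ)⁻¹ * ∑ j : Fin J, |meanEmbed k P (t j) - meanEmbed k Q (t j)| ^ p) ^ ((p : ℝ)⁻¹)

/-- `P` is the measure `P_{Ẍ⊗Y|Z}` of the paper : a Borel probability measure with
`P(A×B) = E[E[1_A(Ẍ)|Z]·E[1_B(Y)|Z]]` for all measurable `A`, `B`. -/
def IsCondProdMeasure {Ω : Type*} [MeasurableSpace Ω] (μ : Measure Ω)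
    {DX DZ DY : Type*} [MeasurableSpace DX] [MeasurableSpace DZ] [MeasurableSpace DY]
    (X : Ω → DX) (Z : Ω → DZ) (Y : Ω → DY) (P : Measure ((DX × DZ) × DY)) : Prop :=
  IsProbabilityMeasure P ∧
    ∀ (A : Set (DX × DZ)) (B : Set DY), MeasurableSet A → MeasurableSet B →
      (P (A ×ˢ B)).toReal =
        ∫ ω, ((μ[fun ω' => A.indicator (fun _ => (1 : ℝ)) (X ω', Z ω') |
                MeasurableSpace.comap Z inferInstance]) ω)
            * ((μ[fun ω' => B.indicator (fun _ => (1 : ℝ)) (Y ω') |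
                MeasurableSpace.comap Z inferInstance]) ω) ∂μ

/-- The witness function `Δ`. -/
def witness {Ω : Type*} [MeasurableSpace Ω] (μ : Measure Ω)
    {DX DZ DY : Type*} [MeasurableSpace DZ]
    (kX : DX × DZ → DX × DZ → ℝ) (kY : DY → DY → ℝ)
    (X : Ω → DX) (Z : Ω → DZ) (Y : Ω → DY) (t1 : DX × DZ) (t2 : DY) : ℝ :=
  ∫ ω, (kX t1 (X ω, Z ω) -
          (μ[fun ω' => kX t1 (X ω', Z ω') | MeasurableSpace.comap Z inferInstance]) ω)
      * (kY t2 (Y ω) -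
          (μ[fun ω' => kY t2 (Y ω') | MeasurableSpace.comap Z inferInstance]) ω) ∂μ

/-- Cramér–Wold characterization: `ν` is the centered Gaussian measure on `ℝ^J` with
covariance matrix `S`. -/
def IsCenteredGaussian {J : ℕ} (S : Matrix (Fin J) (Fin J) ℝ) (ν : Measure (Fin J → ℝ)) : Prop :=
  IsProbabilityMeasure ν ∧
    ∀ a : Fin J → ℝ,
      ν.map (fun v => ∑ j, a j * v j) =
        gaussianReal 0 (Real.toNNReal (∑ i, ∑ j, a i * S i j * a j))

/-- Convergence in distribution (weak convergence of the image laws). -/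
def TendstoInDistribution {Ω : Type*} [MeasurableSpace Ω] (μ : Measure Ω) {E : Type*}
    [TopologicalSpace E] [MeasurableSpace E] (W : ℕ → Ω → E) (ν : Measure E) : Prop :=
  ∀ f : BoundedContinuousFunction E ℝ,
    Tendsto (fun n : ℕ => ∫ ω, f (W n ω) ∂μ) atTop (𝓝 (∫ x, f x ∂ν))

/-- The one-sample statistic `u_i(j)` of the paper (oracle version), where `e1`, `e2` are
the conditional mean functions. -/
def uStat {Ω DX DZ DY : Type*} (kX : DX × DZ → DX × DZ → ℝ) (kY : DY → DY → ℝ)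
    (e1 : DX × DZ → DZ → ℝ) (e2 : DY → DZ → ℝ)
    (xS : ℕ → Ω → DX) (zS : ℕ → Ω → DZ) (yS : ℕ → Ω → DY)
    {J : ℕ} (t : Fin J → (DX × DZ) × DY) (i : ℕ) (j : Fin J) (ω : Ω) : ℝ :=
  (kX (t j).1 (xS i ω, zS i ω) - e1 (t j).1 (zS i ω)) *
    (kY (t j).2 (yS i ω) - e2 (t j).2 (zS i ω))

/-- `S_n`, the empirical mean of the `u_i`. -/
def SStat {Ω DX DZ DY : Type*} (kX : DX × DZ → DX × DZ → ℝ) (kY : DY → DY → ℝ)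
    (e1 : DX × DZ → DZ → ℝ) (e2 : DY → DZ → ℝ)
    (xS : ℕ → Ω → DX) (zS : ℕ → Ω → DZ) (yS : ℕ → Ω → DY)
    {J : ℕ} (t : Fin J → (DX × DZ) × DY) (n : ℕ) (ω : Ω) : Fin J → ℝ :=
  fun j => (n : ℝ)⁻¹ * ∑ i ∈ Finset.range n, uStat kX kY e1 e2 xS zS yS t i j ω

/-- The covariance matrix `Σ = E[u₁ u₁ᵀ]`. -/
def covMat {Ω DX DZ DY : Type*} [MeasurableSpace Ω] (μ : Measure Ω)
    (kX : DX × DZ → DX × DZ → ℝ) (kY : DY → DY → ℝ)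
    (e1 : DX × DZ → DZ → ℝ) (e2 : DY → DZ → ℝ)
    (xS : ℕ → Ω → DX) (zS : ℕ → Ω → DZ) (yS : ℕ → Ω → DY)
    {J : ℕ} (t : Fin J → (DX × DZ) × DY) : Matrix (Fin J) (Fin J) ℝ :=
  Matrix.of fun j j' =>
    ∫ ω, uStat kX kY e1 e2 xS zS yS t 0 j ω * uStat kX kY e1 e2 xS zS yS t 0 j' ω ∂μ

/-- The empirical covariance matrix `Σ̂_n` of the oracle `u_i`. -/
def covHat {Ω DX DZ DY : Type*} (kX : DX × DZ → DX × DZ → ℝ) (kY : DY → DY → ℝ)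
    (e1 : DX × DZ → DZ → ℝ) (e2 : DY → DZ → ℝ)
    (xS : ℕ → Ω → DX) (zS : ℕ → Ω → DZ) (yS : ℕ → Ω → DY)
    {J : ℕ} (t : Fin J → (DX × DZ) × DY) (n : ℕ) (ω : Ω) : Matrix (Fin J) (Fin J) ℝ :=
  Matrix.of fun j j' => (n : ℝ)⁻¹ * ∑ i ∈ Finset.range n,
    uStat kX kY e1 e2 xS zS yS t i j ω * uStat kX kY e1 e2 xS zS yS t i j' ω

/-- The regularized least squares estimator built from the first `r` samples `zs` with
targets `target`, kernel `kZ` and regularization parameter `lam`. -/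
def rls {DZ : Type*} (kZ : DZ → DZ → ℝ) (zs : ℕ → DZ) (target : ℕ → ℝ)
    (r : ℕ) (lam : ℝ) (z : DZ) : ℝ :=
  ∑ i : Fin r,
    (((Matrix.of fun i l : Fin r => kZ (zs i) (zs l)) +
        ((r : ℝ) * lam) • (1 : Matrix (Fin r) (Fin r) ℝ))⁻¹.mulVec
      fun i : Fin r => target i) i * kZ (zs i) z

/-- The statistic `ũ_{i,r}(j)` built from the RLS estimators. -/
def uTildeStat {Ω DX DZ DY : Type*} (kX : DX × DZ → DX × DZ → ℝ) (kY : DY → DY → ℝ)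
    {J : ℕ} (kZ1 kZ2 : Fin J → DZ → DZ → ℝ)
    (xS : ℕ → Ω → DX) (zS : ℕ → Ω → DZ) (yS : ℕ → Ω → DY)
    (t : Fin J → (DX × DZ) × DY) (r : ℕ) (lam : ℝ) (i : ℕ) (j : Fin J) (ω : Ω) : ℝ :=
  (kX (t j).1 (xS i ω, zS i ω) -
      rls (kZ1 j) (fun l => zS l ω) (fun l => kX (t j).1 (xS l ω, zS l ω)) r lam (zS i ω)) *
    (kY (t j).2 (yS i ω) -
      rls (kZ2 j) (fun l => zS l ω) (fun l => kY (t j).2 (yS l ω)) r lam (zS i ω))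

/-- `S̃_{n,r}`. -/
def STilde {Ω DX DZ DY : Type*} (kX : DX × DZ → DX × DZ → ℝ) (kY : DY → DY → ℝ)
    {J : ℕ} (kZ1 kZ2 : Fin J → DZ → DZ → ℝ)
    (xS : ℕ → Ω → DX) (zS : ℕ → Ω → DZ) (yS : ℕ → Ω → DY)
    (t : Fin J → (DX × DZ) × DY) (n r : ℕ) (lam : ℝ) (ω : Ω) : Fin J → ℝ :=
  fun j => (n : ℝ)⁻¹ * ∑ i ∈ Finset.range n,
    uTildeStat kX kY kZ1 kZ2 xS zS yS t r lam i j ω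

/-- `Σ_{n,r}`, the empirical covariance matrix of the `ũ_{i,r}`. -/
def covTilde {Ω DX DZ DY : Type*} (kX : DX × DZ → DX × DZ → ℝ) (kY : DY → DY → ℝ)
    {J : ℕ} (kZ1 kZ2 : Fin J → DZ → DZ → ℝ)
    (xS : ℕ → Ω → DX) (zS : ℕ → Ω → DZ) (yS : ℕ → Ω → DY)
    (t : Fin J → (DX × DZ) × DY) (n r : ℕ) (lam : ℝ) (ω : Ω) : Matrix (Fin J) (Fin J) ℝ :=
  Matrix.of fun j j' => (n : ℝ)⁻¹ * ∑ i ∈ Finset.range n,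
    uTildeStat kX kY kZ1 kZ2 xS zS yS t r lam i j ω *
      uTildeStat kX kY kZ1 kZ2 xS zS yS t r lam i j' ω

open scoped Classical in
/-- The inverse square root `M^{-1/2}` of a positive semidefinite matrix. -/
def invSqrtMat {J : ℕ} (M : Matrix (Fin J) (Fin J) ℝ) : Matrix (Fin J) (Fin J) ℝ :=
  if h : M.PosSemidef then
    ((h.1.eigenvectorUnitary : Matrix (Fin J) (Fin J) ℝ) *
      Matrix.diagonal ((RCLike.ofReal : ℝ → ℝ) ∘ Real.sqrt ∘ h.1.eigenvalues) *
      (star h.1.eigenvectorUnitary : Matrix (Fin J) (Fin J) ℝ))⁻¹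
  else 0

/-- The chi-square distribution with `J` degrees of freedom, realized as the law of the sum of
squares of `J` independent standard Gaussians. -/
def chiSq (J : ℕ) : Measure ℝ :=
  (Measure.pi fun _ : Fin J => gaussianReal 0 1).map fun v => ∑ j, v j ^ 2

/-- Assumption 2 of the paper for the operator `L` on `L²(P_Z)` :
`Tr((L + λ)⁻¹ L) ≤ Q λ^{-γ}`, the trace of the positive operator being computed in any
Hilbert basis. -/
def TraceAssumption {DZ : Type*} [MeasurableSpace DZ] (PZ : Measure DZ)
    (L : Lp ℝ 2 PZ →L[ℝ] Lp ℝ 2 PZ) (Q γ : ℝ) : Prop :=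
  ∀ lam : ℝ, 0 < lam → ∀ (ι : Type) (e : HilbertBasis ι ℝ (Lp ℝ 2 PZ)),
    ∑' i, ⟪(Ring.inverse (L + lam • (1 : Lp ℝ 2 PZ →L[ℝ] Lp ℝ 2 PZ)) * L) (e i), e i⟫ ≤
      Q * lam ^ (-γ)

/-- `P = L^s` : `P` is self-adjoint and acts as `c ^ s` on every eigenvector of `L`
(this determines the fractional power, via functional calculus, of a positive self-adjoint
compact operator). -/
def IsFracPower {H : Type*} [NormedAddCommGroup H] [InnerProductSpace ℝ H]
    (L : H →L[ℝ] H) (s : ℝ) (P : H →L[ℝ] H) : Prop :=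
  (∀ v w : H, ⟪P v, w⟫ = ⟪v, P w⟫) ∧
    ∀ (c : ℝ) (v : H), L v = c • v → P v = c ^ s • v

end CIPaper

open CIPaper

section helpers

open scoped Matrix MatrixOrder

lemma aux_invSqrt {J : ℕ} (M : Matrix (Fin J) (Fin J) ℝ) (hM : M.PosDef) (v : Fin J → ℝ) :
    ∑ j, ((CIPaper.invSqrtMat M).mulVec v j) ^ 2 = v ⬝ᵥ (M⁻¹ *ᵥ v) := by
  have h : M.PosSemidef := hM.posSemidef
  unfold CIPaper.invSqrtMat
  rw [dif_pos h]
  set U : Matrix (Fin J) (Fin J) ℝ := (h.1.eigenvectorUnitary : Matrix (Fin J) (Fin J) ℝ) with hU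
  set D : Matrix (Fin J) (Fin J) ℝ :=
    Matrix.diagonal ((RCLike.ofReal : ℝ → ℝ) ∘ Real.sqrt ∘ h.1.eigenvalues) with hD
  have hsU : (star h.1.eigenvectorUnitary : Matrix (Fin J) (Fin J) ℝ) = star U := rfl
  rw [hsU]
  have hUU : star U * U = 1 := Unitary.coe_star_mul_self h.1.eigenvectorUnitary
  have hDD : D * D = Matrix.diagonal (RCLike.ofReal ∘ h.1.eigenvalues) := by
    rw [hD, Matrix.diagonal_mul_diagonal]
    congr 1
    ext i
    simp [Real.mul_self_sqrt (h.eigenvalues_nonneg i)]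
  have hRR : (U * D * star U) * (U * D * star U) = M := by
    conv_rhs => rw [h.1.spectral_theorem]
    rw [Unitary.conjStarAlgAut_apply, ← hDD]
    calc _ = U * D * (star U * U) * D * star U := by simp only [Matrix.mul_assoc]
      _ = _ := by rw [hUU, hU]; simp only [Matrix.mul_assoc, Matrix.mul_one]
  have hRT : (U * D * star U)ᵀ = U * D * star U := by
    have e : star U = Uᵀ := by ext; simp [Matrix.star_apply]
    rw [e, Matrix.transpose_mul, Matrix.transpose_mul, Matrix.transpose_transpose, hD,
      Matrix.diagonal_transpose, Matrix.mul_assoc]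
  set R := U * D * star U
  clear_value R
  have : ∑ j, ((R⁻¹).mulVec v j) ^ 2 = (R⁻¹ *ᵥ v) ⬝ᵥ (R⁻¹ *ᵥ v) := by
    simp [dotProduct, sq]
  rw [this, ← hRR, Matrix.mul_inv_rev, ← Matrix.mulVec_mulVec, Matrix.dotProduct_mulVec v,
    ← Matrix.mulVec_transpose, Matrix.transpose_nonsing_inv, hRT]

lemma aux_quad {J : ℕ} (M : Matrix (Fin J) (Fin J) ℝ) (a : Fin J → ℝ) :
    a ⬝ᵥ (M *ᵥ a) = ∑ i, ∑ j, a i * a j * M i j := by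
  simp only [dotProduct, Matrix.mulVec, Finset.mul_sum]
  exact Finset.sum_congr rfl fun i _ => Finset.sum_congr rfl fun j _ => by ring

section core
variable {Ω : Type} [MeasurableSpace Ω] {μ : Measure Ω} [IsProbabilityMeasure μ] {J : ℕ}
  {V : ℕ → Ω → Fin J → ℝ} {S : Matrix (Fin J) (Fin J) ℝ}

lemma aux_quad_int (hL2 : ∀ j, MemLp (fun ω => V 0 ω j) 2 μ)
    (hS : ∀ j k, S j k = ∫ ω, V 0 ω j * V 0 ω k ∂μ) (a : Fin J → ℝ) :
    a ⬝ᵥ (S *ᵥ a) = ∫ ω, (∑ j, a j * V 0 ω j) ^ 2 ∂μ := by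
  have hint : ∀ j k, Integrable (fun ω => V 0 ω j * V 0 ω k) μ := fun j k =>
    (hL2 j).integrable_mul (hL2 k)
  rw [aux_quad]
  have : ∀ ω, (∑ j, a j * V 0 ω j) ^ 2 = ∑ i, ∑ j, a i * a j * (V 0 ω i * V 0 ω j) := by
    intro ω
    rw [sq, Finset.sum_mul_sum]
    exact Finset.sum_congr rfl fun i _ => Finset.sum_congr rfl fun j _ => by ring
  simp_rw [this]
  rw [integral_finsetSum _ fun i _ => integrable_finsetSum _ fun j _ => (hint i j).const_mul _]
  refine Finset.sum_congr rfl fun i _ => ?_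
  rw [integral_finsetSum _ fun j _ => (hint i j).const_mul _]
  refine Finset.sum_congr rfl fun j _ => ?_
  rw [integral_const_mul, hS]

lemma aux_possemi (hL2 : ∀ j, MemLp (fun ω => V 0 ω j) 2 μ)
    (hS : ∀ j k, S j k = ∫ ω, V 0 ω j * V 0 ω k ∂μ) : S.PosSemidef := by
  refine Matrix.PosSemidef.of_dotProduct_mulVec_nonneg ?_ fun x => ?_
  · rw [Matrix.isHermitian_iff_isSymm]
    ext i j
    simp only [Matrix.transpose_apply, hS, mul_comm]
  · rw [star_trivial, aux_quad_int hL2 hS]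
    exact integral_nonneg fun ω => sq_nonneg _

lemma aux_clt (hVm : ∀ i, Measurable (V i)) (hind : iIndepFun V μ)
    (hid : ∀ i, IdentDistrib (V i) (V 0) μ μ)
    (hL2 : ∀ j, MemLp (fun ω => V 0 ω j) 2 μ) (h0 : ∀ j, ∫ ω, V 0 ω j ∂μ = 0)
    (hS : ∀ j k, S j k = ∫ ω, V 0 ω j * V 0 ω k ∂μ) :
    MeasureTheory.TendstoInDistribution
      (fun (n : ℕ) ω => (WithLp.toLp 2 (fun j => (√n)⁻¹ * ∑ i ∈ Finset.range n, V i ω j) :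
        EuclideanSpace ℝ (Fin J))) atTop id (fun _ => μ) (multivariateGaussian 0 S) where
  forall_aemeasurable n := by
    have := fun i j => measurable_pi_iff.1 (hVm i) j
    refine Measurable.aemeasurable ?_
    fun_prop
  aemeasurable_limit := by fun_prop
  tendsto := by
    have hps := aux_possemi hL2 hS
    have hVm' := fun i j => measurable_pi_iff.1 (hVm i) j
    refine ProbabilityMeasure.tendsto_iff_tendsto_charFun.2 fun a ↦ ?_
    let φ : (Fin J → ℝ) → ℝ := fun v => ∑ j, a j * v j
    have hφ : Measurable φ := by fun_prop
    let T : ℕ → Ω → ℝ := fun i ω => φ (V i ω)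
    have hTL2 : MemLp (T 0) 2 μ := memLp_finsetSum _ fun j _ => (hL2 j).const_mul _
    have hT0 : ∫ ω, T 0 ω ∂μ = 0 := by
      simp only [T, φ]
      rw [integral_finsetSum _ fun j _ => ((hL2 j).integrable (by norm_num)).const_mul _]
      simp [integral_const_mul, h0]
    have hvar : Var[T 0; μ] = a ⬝ᵥ (S *ᵥ a) := by
      rw [variance_of_integral_eq_zero hTL2.aestronglyMeasurable.aemeasurable hT0,
        aux_quad_int hL2 hS]
    have clt := (tendstoInDistribution_inv_sqrt_mul_sum_sub (P := μ) (X := T) (Y := id)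
      (P' := gaussianReal 0 Var[T 0; μ].toNNReal) ⟨by fun_prop, Measure.map_id⟩ hTL2
      (hind.comp (fun _ => φ) fun _ => hφ) (fun i => (hid i).comp hφ)).tendsto
    have := ProbabilityMeasure.tendsto_iff_tendsto_charFun.1 clt 1
    simp only [ProbabilityMeasure.coe_mk, Measure.map_id] at this ⊢
    rw [charFun_gaussianReal] at this
    rw [charFun_multivariateGaussian hps]
    convert this using 1
    · ext n
      rw [charFun_apply, charFun_apply, integral_map, integral_map]
      · refine integral_congr_ae (ae_of_all _ fun ω => ?_)
        simp only
        congr 3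
        simp only [hT0, mul_zero, sub_zero, T, φ, PiLp.inner_apply, RCLike.inner_apply,
          conj_trivial, one_mul]
        rw [Finset.sum_comm, Finset.mul_sum]
        refine Finset.sum_congr rfl fun j _ => ?_
        rw [← Finset.mul_sum]; ring
      · refine Measurable.aemeasurable ?_
        simp only [T, φ]
        fun_prop
      · refine Measurable.aestronglyMeasurable ?_
        fun_prop
      · refine Measurable.aemeasurable ?_
        fun_prop
      · refine Measurable.aestronglyMeasurable ?_
        fun_prop
    · rw [Real.coe_toNNReal _ (variance_nonneg _ _), hvar]
      simp

end core

lemma aux_inv_entry {J : ℕ} (M : Matrix (Fin J) (Fin J) ℝ) (j k : Fin J) :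
    M⁻¹ j k = (M.det)⁻¹ * M.adjugate j k := by
  rw [Matrix.inv_def, Matrix.smul_apply, Ring.inverse_eq_inv', smul_eq_mul]

lemma aux_inv_meas {J : ℕ} :
    Measurable (fun (M : Fin J → Fin J → ℝ) (j k : Fin J) => (Matrix.of M)⁻¹ j k) := by
  simp_rw [aux_inv_entry]
  refine measurable_pi_iff.2 fun j => measurable_pi_iff.2 fun k => ?_
  have hc : Continuous (fun M : Fin J → Fin J → ℝ => (Matrix.of M : Matrix (Fin J) (Fin J) ℝ)) :=
    continuous_id
  have h1 : Continuous (fun M : Fin J → Fin J → ℝ => (Matrix.of M).det) := hc.matrix_det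
  have h2 : Continuous (fun M : Fin J → Fin J → ℝ => (Matrix.of M).adjugate j k) :=
    hc.matrix_adjugate.matrix_elem j k
  exact h1.measurable.inv.mul h2.measurable

lemma aux_inv_cont {J : ℕ} (M : Fin J → Fin J → ℝ) (hM : IsUnit (Matrix.of M)) :
    ContinuousAt (fun (M : Fin J → Fin J → ℝ) (j k : Fin J) => (Matrix.of M)⁻¹ j k) M := by
  simp_rw [aux_inv_entry]
  refine continuousAt_pi.2 fun j => continuousAt_pi.2 fun k => ?_
  have hc : Continuous (fun M : Fin J → Fin J → ℝ => (Matrix.of M : Matrix (Fin J) (Fin J) ℝ)) :=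
    continuous_id
  have h1 : Continuous (fun M : Fin J → Fin J → ℝ => (Matrix.of M).det) := hc.matrix_det
  have h2 : Continuous (fun M : Fin J → Fin J → ℝ => (Matrix.of M).adjugate j k) :=
    hc.matrix_adjugate.matrix_elem j k
  refine (h1.continuousAt.inv₀ ?_).mul h2.continuousAt
  exact ((Matrix.isUnit_iff_isUnit_det _).1 hM).ne_zero

section core2
variable {Ω : Type} [MeasurableSpace Ω] {μ : Measure Ω} [IsProbabilityMeasure μ] {J : ℕ}
  {V : ℕ → Ω → Fin J → ℝ} {S : Matrix (Fin J) (Fin J) ℝ}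

/-- Regularized empirical covariance. -/
def auxHat (V : ℕ → Ω → Fin J → ℝ) (δ : ℕ → ℝ) (n : ℕ) (ω : Ω) : Fin J → Fin J → ℝ :=
  fun j k => (n : ℝ)⁻¹ * (∑ i ∈ Finset.range n, V i ω j * V i ω k) +
    δ n * (1 : Matrix (Fin J) (Fin J) ℝ) j k

lemma auxHat_posDef (δ : ℕ → ℝ) (hδ : ∀ n, 0 < δ n) (n : ℕ) (ω : Ω) :
    (Matrix.of (auxHat V δ n ω)).PosDef := by
  have e : Matrix.of (auxHat V δ n ω) = δ n • (1 : Matrix (Fin J) (Fin J) ℝ) +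
      (n : ℝ)⁻¹ • ∑ i ∈ Finset.range n, Matrix.vecMulVec (V i ω) (star (V i ω)) := by
    ext j k
    simp [auxHat, Matrix.sum_apply, Matrix.vecMulVec_apply]
    ring
  rw [e]
  refine Matrix.PosDef.add_posSemidef (Matrix.PosDef.one.smul (hδ n)) ?_
  refine Matrix.PosSemidef.smul ?_ (by positivity)
  exact Matrix.posSemidef_sum _ fun i _ => Matrix.posSemidef_vecMulVec_self_star _

lemma aux_chi (hps : S.PosSemidef) (hSu : IsUnit S) (f : BoundedContinuousFunction ℝ ℝ) :
    ∫ x, f (∑ j, ∑ k, x j * x k * S⁻¹ j k) ∂(multivariateGaussian 0 S) =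
      ∫ x, f x ∂(chiSq J) := by
  rw [multivariateGaussian, ← map_pi_eq_stdGaussian, chiSq,
    integral_map (by fun_prop) (by fun_prop),
    integral_map (by fun_prop) (by fun_prop),
    integral_map (Measurable.aemeasurable (by fun_prop)) (by fun_prop)]
  refine integral_congr_ae (ae_of_all _ fun v => ?_)
  simp only
  congr 1
  set R := CFC.sqrt S with hR
  have hRR : R * R = S := CFC.sqrt_mul_sqrt_self S hps.nonneg
  have hRT : Rᵀ = R := by
    have : (CFC.sqrt S).PosSemidef := by
      rw [← Matrix.nonneg_iff_posSemidef]; exact CFC.sqrt_nonneg S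
    exact (Matrix.isHermitian_iff_isSymm.1 this.1)
  clear_value R
  have hRu : IsUnit R.det := by
    rw [Matrix.isUnit_iff_isUnit_det, ← hRR, Matrix.det_mul] at hSu
    exact isUnit_of_mul_isUnit_left hSu
  have : ∀ j, (0 + (Matrix.toEuclideanCLM (𝕜 := ℝ) R) (WithLp.toLp 2 v)) j = (R *ᵥ v) j := by
    intro j; simp
  simp_rw [this]
  rw [← aux_quad, ← hRR, Matrix.mul_inv_rev, Matrix.mulVec_mulVec, Matrix.mul_assoc,
    Matrix.nonsing_inv_mul _ hRu, Matrix.mul_one, ← Matrix.vecMul_transpose, hRT,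
    ← Matrix.dotProduct_mulVec, Matrix.mulVec_mulVec, Matrix.mul_nonsing_inv _ hRu,
    Matrix.one_mulVec]
  simp [dotProduct, sq]

lemma aux_core (hVm : ∀ i, Measurable (V i)) (hind : iIndepFun V μ)
    (hid : ∀ i, IdentDistrib (V i) (V 0) μ μ)
    (hL2 : ∀ j, MemLp (fun ω => V 0 ω j) 2 μ) (h0 : ∀ j, ∫ ω, V 0 ω j ∂μ = 0)
    (hS : ∀ j k, S j k = ∫ ω, V 0 ω j * V 0 ω k ∂μ) (hSu : IsUnit S)
    (δ : ℕ → ℝ) (hδpos : ∀ n, 0 < δ n) (hδ : Tendsto δ atTop (𝓝 0))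
    (f : BoundedContinuousFunction ℝ ℝ) :
    Tendsto (fun n : ℕ => ∫ ω, f ((n : ℝ) *
          ∑ j : Fin J, ((invSqrtMat (Matrix.of (auxHat V δ n ω))).mulVec
            (fun j => (n : ℝ)⁻¹ * ∑ i ∈ Finset.range n, V i ω j) j) ^ 2) ∂μ) atTop
        (𝓝 (∫ x, f x ∂(chiSq J))) := by
  have hVm' := fun i j => measurable_pi_iff.1 (hVm i) j
  have hclt := aux_clt hVm hind hid hL2 h0 hS
  have hps := aux_possemi hL2 hS
  have hHm : ∀ n, Measurable (auxHat V δ n) := by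
    intro n
    refine measurable_pi_iff.2 fun j => measurable_pi_iff.2 fun k => ?_
    unfold auxHat
    fun_prop
  have hYm : ∀ n, Measurable (fun ω (j k : Fin J) => (Matrix.of (auxHat V δ n ω))⁻¹ j k) :=
    fun n => aux_inv_meas.comp (hHm n)
  have hlim : ∀ᵐ ω ∂μ, Tendsto (fun n => auxHat V δ n ω) atTop (𝓝 (fun j k => S j k)) := by
    have : ∀ j k, ∀ᵐ ω ∂μ, Tendsto (fun n : ℕ => (∑ i ∈ Finset.range n, V i ω j * V i ω k) / n)
        atTop (𝓝 (S j k)) := by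
      intro j k
      have hm : Measurable (fun v : Fin J → ℝ => v j * v k) := by fun_prop
      rw [hS]
      exact strong_law_ae_real (fun i ω => V i ω j * V i ω k) ((hL2 j).integrable_mul (hL2 k))
        (fun i i' hii => (hind.indepFun hii).comp hm hm) (fun i => (hid i).comp hm)
    filter_upwards [ae_all_iff.2 fun j => ae_all_iff.2 fun k => this j k] with ω hω
    refine tendsto_pi_nhds.2 fun j => tendsto_pi_nhds.2 fun k => ?_
    have := (hω j k).add (hδ.mul_const ((1 : Matrix (Fin J) (Fin J) ℝ) j k))
    simp only [zero_mul, add_zero] at this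
    refine this.congr fun n => ?_
    unfold auxHat
    rw [div_eq_inv_mul]
  have hY : TendstoInMeasure μ (fun n ω (j k : Fin J) => (Matrix.of (auxHat V δ n ω))⁻¹ j k) atTop
      (fun _ => fun j k => S⁻¹ j k) := by
    refine tendstoInMeasure_of_tendsto_ae (fun n => (hYm n).aestronglyMeasurable) ?_
    filter_upwards [hlim] with ω hω
    exact (aux_inv_cont (fun j k => S j k) hSu).tendsto.comp hω
  let g : EuclideanSpace ℝ (Fin J) × (Fin J → Fin J → ℝ) → ℝ := fun p =>
    ∑ j, ∑ k, p.1 j * p.1 k * p.2 j k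
  have hg : Continuous g := by fun_prop
  have hfin := hclt.continuous_comp_prodMk_of_tendstoInMeasure_const hg hY
    (fun n => (hYm n).aemeasurable)
  have hfm := hfin.forall_aemeasurable
  have ht := ProbabilityMeasure.tendsto_iff_forall_integral_tendsto.1 hfin.tendsto f
  simp only [ProbabilityMeasure.coe_mk] at ht
  rw [integral_map hfin.aemeasurable_limit (by fun_prop)] at ht
  rw [← aux_chi hps hSu f]
  refine ht.congr fun n => ?_
  rw [integral_map (hfm n) (by fun_prop)]
  refine integral_congr_ae (ae_of_all _ fun ω => ?_)
  simp only
  congr 1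
  rw [aux_invSqrt _ (auxHat_posDef δ hδpos n ω), aux_quad, Finset.mul_sum]
  refine Finset.sum_congr rfl fun j _ => ?_
  rw [Finset.mul_sum]
  refine Finset.sum_congr rfl fun k _ => ?_
  have : (√(n:ℝ))⁻¹ * (√(n:ℝ))⁻¹ = (n:ℝ) * ((n:ℝ)⁻¹ * (n:ℝ)⁻¹) := by
    rw [← mul_inv, Real.mul_self_sqrt (by positivity)]
    rcases eq_or_ne (n : ℝ) 0 with h | h
    · simp [h]
    · field_simp
  linear_combination ((∑ i ∈ Finset.range n, V i ω j) * (∑ i ∈ Finset.range n, V i ω k) *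
    (Matrix.of (auxHat V δ n ω))⁻¹ j k) * this

end core2

lemma aux_kernel {DX DY : Type*} [MeasurableSpace DX] [MeasurableSpace DY]
    [NormedAddCommGroup DX] [NormedSpace ℝ DX] [NormedAddCommGroup DY] [NormedSpace ℝ DY]
    [MeasurableSingletonClass DX] [MeasurableSingletonClass DY] [Nontrivial DX]
    {kX : DX → DX → ℝ} {kY : DY → DY → ℝ} (hk : Assumption1 kX kY) :
    (∃ C, ∀ x y, |kX x y| ≤ C) ∧ (∃ C, ∀ x y, |kY x y| ≤ C) ∧
      (∀ x, Continuous (kX x)) ∧ (∀ y, Continuous (kY y)) := by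
  obtain ⟨p, q, hpq⟩ : ∃ p q : DX × DY, kX p.1 q.1 * kY p.2 q.2 ≠ 0 := by
    by_contra! hcon
    obtain ⟨x, hx⟩ := exists_ne (0 : DX)
    have := hk.charac (Measure.dirac ((0 : DX), (0 : DY))) (Measure.dirac (x, (0 : DY)))
      inferInstance inferInstance (fun t => by simp [meanEmbed, hcon])
    have h2 := congrArg (fun ν => ν {((0 : DX), (0 : DY))}) this
    simp [hx] at h2
  have hp1 : kX p.1 q.1 ≠ 0 := left_ne_zero_of_mul hpq
  have hp2 : kY p.2 q.2 ≠ 0 := right_ne_zero_of_mul hpq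
  obtain ⟨C, hC⟩ := hk.bounded
  refine ⟨⟨C / |kY p.2 q.2|, fun x y => ?_⟩, ⟨C / |kX p.1 q.1|, fun x y => ?_⟩, fun x => ?_,
    fun y => ?_⟩
  · rw [le_div_iff₀ (abs_pos.2 hp2), ← abs_mul]
    exact hC (x, p.2) (y, q.2)
  · rw [le_div_iff₀ (abs_pos.2 hp1), ← abs_mul, mul_comm]
    exact hC (p.1, x) (q.1, y)
  · have : kX x = fun x' => (kX x x' * kY p.2 q.2) / kY p.2 q.2 := by
      ext x'; field_simp
    rw [this]
    refine Continuous.div_const ?_ _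
    exact hk.continuous.comp (f := fun x' : DX => (((x, p.2), (x', q.2)) : (DX × DY) × (DX × DY)))
      (by fun_prop)
  · have : kY y = fun y' => (kX p.1 q.1 * kY y y') / kX p.1 q.1 := by
      ext x'; field_simp
    rw [this]
    refine Continuous.div_const ?_ _
    exact hk.continuous.comp (f := fun y' : DY => (((p.1, y), (q.1, y')) : (DX × DY) × (DX × DY)))
      (by fun_prop)

section meanzero
variable {Ω : Type} [mΩ : MeasurableSpace Ω] [StandardBorelSpace Ω] [Nonempty Ω]
    {μ : Measure Ω} [IsProbabilityMeasure μ] {DX DY DZ : Type*}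
    [MeasurableSpace DX] [MeasurableSpace DY] [mDZ : MeasurableSpace DZ]
    [StandardBorelSpace DX] [StandardBorelSpace DY] [Nonempty DX] [Nonempty DY]
    {X : Ω → DX} {Z : Ω → DZ} {Y : Ω → DY}

lemma aux_bdd {F : Ω → ℝ} {e : Ω → ℝ} {C : ℝ} (hFm : Measurable F) (hem : Measurable e)
    (hF : ∀ ω, |F ω| ≤ C) {m : MeasurableSpace Ω}
    (he : e =ᵐ[μ] μ[F | m]) : MemLp (fun ω => F ω - e ω) ⊤ μ := by
  have hC : 0 ≤ C := (abs_nonneg _).trans (hF (Classical.arbitrary Ω))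
  have hb := ae_bdd_condExp_of_ae_bdd (μ := μ) (m := m) (R := ⟨C, hC⟩) (f := F) (ae_of_all _ hF)
  refine MemLp.sub ?_ ?_
  · exact memLp_top_of_bound hFm.aestronglyMeasurable C (ae_of_all _ hF)
  · refine memLp_top_of_bound hem.aestronglyMeasurable C ?_
    filter_upwards [hb, he] with ω h1 h2
    rw [h2]; exact h1

lemma aux_mean (hX : Measurable X) (hZ : Measurable Z) (hY : Measurable Y)
    (hH0 : CondIndepFun (MeasurableSpace.comap Z mDZ) hZ.comap_le X Y μ)
    {f : DX × DZ → ℝ} {g : DY → ℝ} (hf : Measurable f) (hg : Measurable g)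
    {Cf Cg : ℝ} (hfb : ∀ x, |f x| ≤ Cf) (hgb : ∀ y, |g y| ≤ Cg)
    {e1 e2 : DZ → ℝ} (he1m : Measurable e1) (he2m : Measurable e2)
    (he1 : (fun ω => e1 (Z ω)) =ᵐ[μ] μ[fun ω => f (X ω, Z ω) | MeasurableSpace.comap Z mDZ])
    (he2 : (fun ω => e2 (Z ω)) =ᵐ[μ] μ[fun ω => g (Y ω) | MeasurableSpace.comap Z mDZ]) :
    MemLp (fun ω => (f (X ω, Z ω) - e1 (Z ω)) * (g (Y ω) - e2 (Z ω))) 2 μ ∧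
    ∫ ω, (f (X ω, Z ω) - e1 (Z ω)) * (g (Y ω) - e2 (Z ω)) ∂μ = 0 := by
  have hA := aux_bdd (μ := μ) (F := fun ω => f (X ω, Z ω)) (e := fun ω => e1 (Z ω)) (by fun_prop) (he1m.comp hZ)
    (fun ω => hfb _) he1
  have hB := aux_bdd (μ := μ) (F := fun ω => g (Y ω)) (e := fun ω => e2 (Z ω)) (by fun_prop) (he2m.comp hZ)
    (fun ω => hgb _) he2
  have hAB := hB.mul (r := ⊤) hA
  refine ⟨hAB.mono_exponent le_top, ?_⟩
  have hZX : Measurable (fun ω => (Z ω, X ω)) := hZ.prodMk hX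
  set m : MeasurableSpace Ω := MeasurableSpace.comap (fun ω => (Z ω, X ω)) inferInstance with hm
  have hmle : m ≤ mΩ := hZX.comap_le
  have hgi : Integrable (fun ω => g (Y ω)) μ :=
    (memLp_top_of_bound (hg.comp hY).aestronglyMeasurable Cg
      (ae_of_all _ fun ω => hgb _)).integrable le_top
  have hcd := (condIndepFun_iff_condDistrib_prod_ae_eq_prodMkRight hY hX hZ).1 hH0
  have hcd' := ae_of_ae_map hZX.aemeasurable hcd
  have hc1 := condExp_ae_eq_integral_condDistrib hZX hY.aemeasurable hg.stronglyMeasurable hgi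
  have hc2 := condExp_ae_eq_integral_condDistrib hZ hY.aemeasurable hg.stronglyMeasurable hgi
  have hm0 : Measurable[m] (fun ω => (Z ω, X ω)) := comap_measurable _
  have he2i : Integrable (fun ω => e2 (Z ω)) μ := integrable_condExp.congr he2.symm
  have he2s : StronglyMeasurable[m] (fun ω => e2 (Z ω)) :=
    (((he2m.comp measurable_fst).comp hm0 : Measurable[m] _)).stronglyMeasurable
  have hBz : μ[fun ω => g (Y ω) - e2 (Z ω) | m] =ᵐ[μ] 0 := by
    have hs := condExp_sub hgi he2i m
    rw [condExp_of_stronglyMeasurable hmle he2s he2i] at hs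
    filter_upwards [hs, hc1, hc2, hcd', he2] with ω h1 h2 h3 h4 h5
    refine h1.trans ?_
    rw [Pi.sub_apply, h2, h4, h5, h3]
    simp
  have hAs : StronglyMeasurable[m] (fun ω => f (X ω, Z ω) - e1 (Z ω)) := by
    have : Measurable (fun p : DZ × DX => f (p.2, p.1) - e1 p.1) := by fun_prop
    exact (this.comp hm0 : Measurable[m] _).stronglyMeasurable
  have hpull := condExp_mul_of_stronglyMeasurable_left hAs (hAB.integrable le_top)
    (hB.integrable le_top)
  have : ∫ ω, (f (X ω, Z ω) - e1 (Z ω)) * (g (Y ω) - e2 (Z ω)) ∂μ =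
      ∫ ω, (μ[(fun ω => f (X ω, Z ω) - e1 (Z ω)) * (fun ω => g (Y ω) - e2 (Z ω)) | m]) ω ∂μ :=
    (integral_condExp hmle).symm
  rw [this]
  refine integral_eq_zero_of_ae ?_
  filter_upwards [hpull, hBz] with ω h1 h2
  rw [h1, Pi.mul_apply, h2]
  simp

end meanzero

end helpers


/-- the normalized oracle statistic converges in law to `χ²(J)` under `H₀`. -/
theorem statement_16
    (dx dy dz : ℕ) (hdx : 1 ≤ dx) (hdy : 1 ≤ dy) (hdz : 1 ≤ dz)
    {Ω : Type} [MeasurableSpace Ω] [StandardBorelSpace Ω] [Nonempty Ω]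
    (μ : Measure Ω) [IsProbabilityMeasure μ]
    (X : Ω → Fin dx → ℝ) (Z : Ω → Fin dz → ℝ) (Y : Ω → Fin dy → ℝ)
    (hX : Measurable X) (hZ : Measurable Z) (hY : Measurable Y)
    (J : ℕ) (hJ : 1 ≤ J)
    (kX : ((Fin dx → ℝ) × (Fin dz → ℝ)) → ((Fin dx → ℝ) × (Fin dz → ℝ)) → ℝ) (kY : (Fin dy → ℝ) → (Fin dy → ℝ) → ℝ)
    (hk : Assumption1 kX kY)
    (e1 : ((Fin dx → ℝ) × (Fin dz → ℝ)) → (Fin dz → ℝ) → ℝ) (e2 : (Fin dy → ℝ) → (Fin dz → ℝ) → ℝ)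
    (he1m : ∀ t1, Measurable (e1 t1)) (he2m : ∀ t2, Measurable (e2 t2))
    (he1 : ∀ t1, (fun ω => e1 t1 (Z ω)) =ᵐ[μ]
      μ[fun ω' => kX t1 (X ω', Z ω') | MeasurableSpace.comap Z inferInstance])
    (he2 : ∀ t2, (fun ω => e2 t2 (Z ω)) =ᵐ[μ]
      μ[fun ω' => kY t2 (Y ω') | MeasurableSpace.comap Z inferInstance])
    (xS : ℕ → Ω → Fin dx → ℝ) (zS : ℕ → Ω → Fin dz → ℝ) (yS : ℕ → Ω → Fin dy → ℝ)
    (hxS : ∀ i, Measurable (xS i)) (hzS : ∀ i, Measurable (zS i)) (hyS : ∀ i, Measurable (yS i))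
    (hiid : iIndepFun (fun i ω => ((xS i ω, zS i ω), yS i ω)) μ)
    (hlaw : ∀ i, μ.map (fun ω => ((xS i ω, zS i ω), yS i ω)) =
      μ.map fun ω => ((X ω, Z ω), Y ω))
    (t : Fin J → (((Fin dx → ℝ) × (Fin dz → ℝ)) × (Fin dy → ℝ)))
    (hH0 : CondIndepFun (MeasurableSpace.comap Z inferInstance) hZ.comap_le X Y μ)
    (hSigmaInv : IsUnit (covMat μ kX kY e1 e2 xS zS yS t))
    (δ : ℕ → ℝ) (hδpos : ∀ n, 0 < δ n) (hδ : Tendsto δ atTop (𝓝 0)) :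
    ∀ f : BoundedContinuousFunction ℝ ℝ,
      Tendsto (fun n : ℕ => ∫ ω, f ((n : ℝ) *
          ∑ j : Fin J, ((invSqrtMat (covHat kX kY e1 e2 xS zS yS t n ω + δ n • (1 : Matrix (Fin J) (Fin J) ℝ))).mulVec
            (SStat kX kY e1 e2 xS zS yS t n ω) j) ^ 2) ∂μ) atTop
        (𝓝 (∫ x, f x ∂(chiSq J))) := by
  have : Nonempty (Fin dx) := ⟨⟨0, hdx⟩⟩
  obtain ⟨⟨C1, hC1⟩, ⟨C2, hC2⟩, hc1, hc2⟩ := aux_kernel hk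
  let φ : ((Fin dx → ℝ) × (Fin dz → ℝ)) × (Fin dy → ℝ) → Fin J → ℝ := fun p j =>
    (kX (t j).1 p.1 - e1 (t j).1 p.1.2) * (kY (t j).2 p.2 - e2 (t j).2 p.1.2)
  have hφ : Measurable φ := by
    refine measurable_pi_iff.2 fun j => ?_
    have h1 := (hc1 (t j).1).measurable
    have h2 := (hc2 (t j).2).measurable
    have h3 := he1m (t j).1
    have h4 := he2m (t j).2
    simp only [φ]
    fun_prop
  let V : ℕ → Ω → Fin J → ℝ := fun i ω => φ ((xS i ω, zS i ω), yS i ω)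
  have hSm : ∀ i, Measurable (fun ω => ((xS i ω, zS i ω), yS i ω)) := fun i =>
    ((hxS i).prodMk (hzS i)).prodMk (hyS i)
  have hXm : Measurable (fun ω => ((X ω, Z ω), Y ω)) := (hX.prodMk hZ).prodMk hY
  have hidX : ∀ i, IdentDistrib (V i) (fun ω => φ ((X ω, Z ω), Y ω)) μ μ := fun i =>
    IdentDistrib.comp ⟨(hSm i).aemeasurable, hXm.aemeasurable, hlaw i⟩ hφ
  have hmean : ∀ j, MemLp (fun ω => φ ((X ω, Z ω), Y ω) j) 2 μ ∧
      ∫ ω, φ ((X ω, Z ω), Y ω) j ∂μ = 0 := fun j =>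
    aux_mean hX hZ hY hH0 (hc1 (t j).1).measurable (hc2 (t j).2).measurable
      (hC1 (t j).1) (hC2 (t j).2) (he1m _) (he2m _) (he1 (t j).1) (he2 (t j).2)
  have hidj : ∀ j, IdentDistrib (fun ω => V 0 ω j) (fun ω => φ ((X ω, Z ω), Y ω) j) μ μ :=
    fun j => (hidX 0).comp (measurable_pi_apply j)
  intro f
  have main := aux_core (μ := μ) (V := V) (S := covMat μ kX kY e1 e2 xS zS yS t)
    (fun i => hφ.comp (hSm i)) (hiid.comp (fun _ => φ) fun _ => hφ)
    (fun i => (hidX i).trans (hidX 0).symm)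
    (fun j => (hidj j).memLp_iff.2 (hmean j).1)
    (fun j => (hidj j).integral_eq.trans (hmean j).2)
    (fun j k => rfl) hSigmaInv δ hδpos hδ f
  refine main.congr fun n => ?_
  rfl
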